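/- Assume the admissibility hypotheses on φ¹, ψ¹, c₁, c₂. Then the shearlet cone family Ψ(ψ, c) = {ψ_{j,k,m} : j ∈ ℕ, k ∈ ℤ with |k| ≤ 2^{⌊j/2⌋}, m = (m₁, m₂) ∈ ℤ²}, where ψ_{j,k,m}(x₁, x₂) = 2^{3j/4} ψ¹(2^j x₁ + 2^{⌊j/2⌋} k x₂ − c₁ m₁) · φ¹(2^{⌊j/2⌋} x₂ − c₂ m₂), is linearly independent as a family in L²(ℝ²) indexed by the triples (j, k, m). -/

import Mathlib

open MeasureTheory

lemma aux_translates (s : ℝ) (hs : 0 < s) (φ : ℝ → ℂ) (hφsupp : tsupport φ = Set.Icc 0 s) :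
    LinearIndependent ℂ (fun t : ℝ => fun y : ℝ => φ (y - t)) := by
  have hneg : ∀ y : ℝ, y < 0 → φ y = 0 := by
    intro y hy
    apply image_eq_zero_of_notMem_tsupport
    rw [hφsupp]
    intro h
    exact absurd h.1 (not_le.mpr hy)
  have h0 : (0 : ℝ) ∈ closure (Function.support φ) := by
    change (0 : ℝ) ∈ tsupport φ
    rw [hφsupp]
    exact ⟨le_refl _, hs.le⟩
  rw [mem_closure_iff_frequently] at h0
  rw [linearIndependent_iff']
  intro T g hg
  by_contra hcon
  push Not at hcon
  obtain ⟨i, hi, hgi⟩ := hcon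
  have hne : (T.filter (fun t => g t ≠ 0)).Nonempty := ⟨i, by simp [hi, hgi]⟩
  set t0 := (T.filter (fun t => g t ≠ 0)).min' hne with ht0
  have ht0m : t0 ∈ T.filter (fun t => g t ≠ 0) := Finset.min'_mem _ _
  have hev : ∀ᶠ y : ℝ in nhds 0, ∀ t ∈ T.filter (fun t => g t ≠ 0), t ≠ t0 → y + t0 - t < 0 := by
    rw [Filter.eventually_all_finset]
    intro t ht
    by_cases h : t = t0
    · simp [h]
    · have hlt : t0 < t := lt_of_le_of_ne (Finset.min'_le _ _ ht) (Ne.symm h)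
      filter_upwards [Iio_mem_nhds (show (0 : ℝ) < t - t0 by linarith)] with y hy _
      have : y < t - t0 := hy
      linarith
  obtain ⟨y, hy, hy'⟩ := (h0.and_eventually hev).exists
  have h1 := congrFun hg (y + t0)
  simp only [Finset.sum_apply, Pi.smul_apply, smul_eq_mul, Pi.zero_apply] at h1
  rw [Finset.mem_filter] at ht0m
  rw [Finset.sum_eq_single_of_mem t0 ht0m.1] at h1
  · simp only [add_sub_cancel_right, mul_eq_zero] at h1
    rcases h1 with h1 | h1
    · exact ht0m.2 h1
    · exact hy h1
  · intro t ht htne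
    by_cases hgt : g t = 0
    · simp [hgt]
    · rw [hneg _ (hy' t (by simp [ht, hgt]) htne), mul_zero]

lemma aux_hilbert {E : Type*} [NormedAddCommGroup E] [InnerProductSpace ℂ E] (e : ℤ → E) (c : ℂ)
    (hc : c ≠ 0) (he : ∀ k k', inner ℂ (e k) (e k') = if k = k' then c else 0)
    (K : Finset ℤ) (f : E) (hf : f ∈ closure (Submodule.span ℂ (Set.range e) : Set E))
    (hK : ∀ k ∉ K, inner ℂ (e k) f = 0) :
    f = ∑ k ∈ K, (inner ℂ (e k) f / c) • e k := by
  set P := ∑ k ∈ K, (inner ℂ (e k) f / c) • e k with hP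
  have horth : ∀ k, inner ℂ (e k) (f - P) = 0 := by
    intro k
    rw [inner_sub_right, hP, inner_sum]
    simp only [inner_smul_right, he]
    by_cases hk : k ∈ K
    · simp [hk, hc]
    · simp [hk, hK k hk]
  have hPm : P ∈ Submodule.span ℂ (Set.range e) :=
    Submodule.sum_mem _ fun k _ => Submodule.smul_mem _ _ (Submodule.subset_span ⟨k, rfl⟩)
  have hmem : f - P ∈ (Submodule.span ℂ (Set.range e)).topologicalClosure :=
    Submodule.sub_mem _ hf (Submodule.le_topologicalClosure _ hPm)
  have hmem2 : f - P ∈ (Submodule.span ℂ (Set.range e))ᗮ := by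
    rw [Submodule.mem_orthogonal]
    intro u hu
    induction hu using Submodule.span_induction with
    | mem x hx => obtain ⟨k, rfl⟩ := hx; exact horth k
    | zero => simp
    | add x y _ _ hx hy => rw [inner_add_left, hx, hy, add_zero]
    | smul a x _ hx => rw [inner_smul_left, hx, mul_zero]
  rw [← Submodule.orthogonal_closure] at hmem2
  have := Submodule.inner_right_of_mem_orthogonal hmem hmem2
  exact sub_eq_zero.mp (inner_self_eq_zero.mp this)

lemma aux_expand (s : ℝ) (φ f : ℝ → ℂ)
    (hφc : Continuous φ) (hφsupp : tsupport φ = Set.Icc 0 s)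
    (hφON : ∀ m m' : ℤ,
      (∫ x : ℝ, (starRingEnd ℂ) (φ (x - m)) * φ (x - m')) = if m = m' then 1 else 0)
    (hfc : Continuous f) (hfs : HasCompactSupport f) (n : ℕ)
    (hspan : ∀ ε : ℝ, 0 < ε →
      ∃ (F : Finset ℤ) (a : ℤ → ℂ),
        eLpNorm (fun x : ℝ =>
            f x - ∑ k ∈ F, a k * φ ((2 : ℝ) ^ n * x - k)) 2 volume
          < ENNReal.ofReal ε) :
    ∃ (K : Finset ℤ) (a : ℤ → ℂ), ∀ x, f x = ∑ k ∈ K, a k * φ ((2 : ℝ) ^ n * x - k) := by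
  have h2 : (0 : ℝ) < 2 ^ n := by positivity
  have hφcs : HasCompactSupport φ := by
    rw [HasCompactSupport, hφsupp]; exact isCompact_Icc
  let E : ℤ → ℝ → ℂ := fun k x => φ ((2 : ℝ) ^ n * x - k)
  have hEc : ∀ k, Continuous (E k) := fun k => by fun_prop
  have hEcs : ∀ k, HasCompactSupport (E k) := by
    intro k
    have := hφcs.comp_homeomorph ((Homeomorph.mulLeft₀ ((2 : ℝ) ^ n) h2.ne').trans
      (Homeomorph.subRight (k : ℝ)))
    exact this
  have hEm : ∀ k, MemLp (E k) 2 volume := fun k => (hEc k).memLp_of_hasCompactSupport (hEcs k)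
  have hfm : MemLp f 2 volume := hfc.memLp_of_hasCompactSupport hfs
  have hin : ∀ (u v : ℝ → ℂ) (hu : MemLp u 2 volume) (hv : MemLp v 2 volume),
      inner ℂ (hu.toLp u) (hv.toLp v) = ∫ x, (starRingEnd ℂ) (u x) * v x := by
    intro u v hu hv
    rw [MeasureTheory.L2.inner_def]
    apply integral_congr_ae
    filter_upwards [hu.coeFn_toLp, hv.coeFn_toLp] with x h1 h2
    rw [h1, h2, RCLike.inner_apply, mul_comm]
  obtain ⟨M, hM⟩ := hfs.isCompact.isBounded.subset_closedBall 0
  obtain ⟨N, hN⟩ := exists_nat_gt ((2 : ℝ) ^ n * |M| + |s|)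
  have key := aux_hilbert (fun k => (hEm k).toLp (E k)) (((2 : ℝ) ^ n)⁻¹ : ℝ)
    (by exact_mod_cast (inv_pos.mpr h2).ne') (by
      intro k k'
      rw [hin]
      have := MeasureTheory.Measure.integral_comp_mul_left
        (fun x : ℝ => (starRingEnd ℂ) (φ (x - k)) * φ (x - k')) ((2 : ℝ) ^ n)
      simp only [E]
      rw [this, hφON, abs_of_pos (inv_pos.mpr h2)]
      split_ifs <;> simp) (Finset.Icc (-(N : ℤ)) N) (hfm.toLp f) (by
      rw [Metric.mem_closure_iff]
      intro ε hε
      obtain ⟨F, a, hFa⟩ := hspan ε hε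
      have hsm : MemLp (∑ k ∈ F, a k • E k) 2 volume :=
        memLp_finsetSum' _ fun k _ => (hEm k).const_smul _
      refine ⟨hsm.toLp _, ?_, ?_⟩
      · have : hsm.toLp _ = ∑ k ∈ F, a k • (hEm k).toLp (E k) := by
          apply Lp.ext
          refine hsm.coeFn_toLp.trans ?_
          refine .trans ?_ (Lp.coeFn_finsetSum _ _).symm
          have : ∀ k ∈ F, (a k • E k) =ᵐ[volume] ((a k • (hEm k).toLp (E k) : Lp ℂ 2 volume) : ℝ → ℂ) := by
            intro k _
            refine .trans ?_ (Lp.coeFn_smul _ _).symm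
            exact (hEm k).coeFn_toLp.symm.const_smul _
          have h3 : ∀ᵐ x ∂(volume : Measure ℝ), ∀ k ∈ F, (a k • E k) x = ((a k • (hEm k).toLp (E k) : Lp ℂ 2 volume) : ℝ → ℂ) x := by
            rw [Filter.eventually_all_finset]
            exact this
          filter_upwards [h3] with x hx
          rw [Finset.sum_apply, Finset.sum_apply]
          exact Finset.sum_congr rfl hx
        rw [this]
        exact Submodule.sum_mem _ fun k _ => Submodule.smul_mem _ _ (Submodule.subset_span ⟨k, rfl⟩)
      · rw [dist_eq_norm, ← MemLp.toLp_sub, Lp.norm_toLp]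
        apply ENNReal.toReal_lt_of_lt_ofReal
        convert hFa using 2
        ext x
        simp [E]) (by
      intro k hk
      rw [hin]
      rw [← integral_zero ℝ ℂ]
      congr 1
      ext x
      by_contra hne
      have hne1 : φ ((2 : ℝ) ^ n * x - k) ≠ 0 := by
        intro h; apply hne; simp [E, h]
      have hne2 : f x ≠ 0 := by
        intro h; apply hne; simp [h]
      have h4 : (2 : ℝ) ^ n * x - k ∈ Set.Icc 0 s := by
        rw [← hφsupp]; exact subset_tsupport _ hne1
      have h5 := hM (subset_tsupport _ hne2)
      rw [mem_closedBall_zero_iff, Real.norm_eq_abs] at h5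
      have h6 : |(2 : ℝ) ^ n * x| ≤ 2 ^ n * |M| := by
        rw [abs_mul, abs_of_pos h2]
        exact mul_le_mul_of_nonneg_left (h5.trans (le_abs_self _)) h2.le
      rw [abs_le] at h6
      apply hk
      rw [Finset.mem_Icc]
      have h7 := le_abs_self s
      have h8 := abs_nonneg s
      constructor
      · have : (-(N : ℝ)) ≤ k := by linarith [h4.1, h4.2]
        exact_mod_cast this
      · have : (k : ℝ) ≤ N := by linarith [h4.1, h4.2]
        exact_mod_cast this)
  set K := Finset.Icc (-(N : ℤ)) N
  set A : ℤ → ℂ := fun k => inner ℂ ((hEm k).toLp (E k)) (hfm.toLp f) / (((2 : ℝ) ^ n)⁻¹ : ℝ) with hA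
  refine ⟨K, A, ?_⟩
  have hae : f =ᵐ[volume] fun x => ∑ k ∈ K, A k * φ ((2 : ℝ) ^ n * x - k) := by
    refine hfm.coeFn_toLp.symm.trans ?_
    rw [key]
    refine (Lp.coeFn_finsetSum _ _).trans ?_
    have h3 : ∀ᵐ x ∂(volume : Measure ℝ), ∀ k ∈ K,
        ((A k • (hEm k).toLp (E k) : Lp ℂ 2 volume) : ℝ → ℂ) x = A k * E k x := by
      rw [Filter.eventually_all_finset]
      intro k _
      filter_upwards [Lp.coeFn_smul (A k) ((hEm k).toLp (E k)), (hEm k).coeFn_toLp] with x h1 h2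
      rw [h1, Pi.smul_apply, h2, smul_eq_mul]
    filter_upwards [h3] with x hx
    rw [Finset.sum_apply]
    exact Finset.sum_congr rfl hx
  have hcont : Continuous fun x : ℝ => ∑ k ∈ K, A k * φ ((2 : ℝ) ^ n * x - k) := by fun_prop
  exact fun x => congrFun ((hfc.ae_eq_iff_eq volume hcont).mp hae) x

/-- Under the admissibility hypotheses, the shearlet cone family
`Ψ(ψ, c) = {ψ_{j,k,m}}` with
`ψ_{j,k,m}(x₁,x₂) = 2^(3j/4) ψ¹(2^j x₁ + 2^⌊j/2⌋ k x₂ - c₁ m₁) φ¹(2^⌊j/2⌋ x₂ - c₂ m₂)`,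
`j ∈ ℕ`, `|k| ≤ 2^⌊j/2⌋`, `m ∈ ℤ²`, is linearly independent in `L²(ℝ²)`. -/
theorem stmt3
    -- admissibility hypotheses on φ¹ (= φ) and ψ¹ (= ψ)
    (s : ℝ) (hs : 0 < s) (φ ψ : ℝ → ℂ)
    (hφc : Continuous φ) (hφsupp : tsupport φ = Set.Icc 0 s)
    (hφON : ∀ m m' : ℤ,
      (∫ x : ℝ, (starRingEnd ℂ) (φ (x - m)) * φ (x - m')) = if m = m' then 1 else 0)
    (hψc : Continuous ψ) (hψcs : HasCompactSupport ψ)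
    (hψorth : ∀ (j j' : ℕ) (l l' : ℤ), (j, l) ≠ (j', l') →
      (∫ x : ℝ, (starRingEnd ℂ) (ψ ((2 : ℝ) ^ j * x - l)) * ψ ((2 : ℝ) ^ j' * x - l')) = 0)
    (hψne : ∀ (j : ℕ) (l : ℤ), (fun x : ℝ => ψ ((2 : ℝ) ^ j * x - l)) ≠ 0)
    (hψspan : ∀ (J j : ℕ), j ≤ J → ∀ l : ℤ, ∀ ε : ℝ, 0 < ε →
      ∃ (F : Finset ℤ) (a : ℤ → ℂ),
        eLpNorm (fun x : ℝ =>
            ψ ((2 : ℝ) ^ j * x - l) - ∑ k ∈ F, a k * φ ((2 : ℝ) ^ (J + 1) * x - k)) 2 volume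
          < ENNReal.ofReal ε)
    -- sampling constants
    (a₁ b₁ a₂ b₂ : ℕ) (ha₁ : 0 < a₁) (ha₂ : 0 < a₂) (hb₁ : 0 < b₁) (hb₂ : 0 < b₂)
    (hb₁odd : Odd b₁) (hb₂odd : Odd b₂)
    (c₁ c₂ : ℝ) (hc₁ : c₁ = (a₁ : ℝ) / b₁) (hc₂ : c₂ = (a₂ : ℝ) / b₂)
    -- linear independence of the sampled 1D wavelet system
    (h1d : ∀ c : ℝ, (c = c₁ ∨ c = c₂) →
      ∀ (F : Finset ℤ) (G : Finset (ℕ × ℤ)) (α : ℤ → ℂ) (β : ℕ × ℤ → ℂ),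
        (fun x : ℝ => ∑ m ∈ F, α m * φ (x - c * m) +
            ∑ p ∈ G, β p * ψ ((2 : ℝ) ^ p.1 * x - c * p.2)) = 0 →
        (∀ m ∈ F, α m = 0) ∧ ∀ p ∈ G, β p = 0) :
    -- conclusion: linear independence of the cone Ψ(ψ, c) in L²(ℝ²)
    ∀ (S : Finset (ℕ × ℤ × ℤ × ℤ)) (α : ℕ × ℤ × ℤ × ℤ → ℂ),
      (∀ p ∈ S, |p.2.1| ≤ (2 : ℤ) ^ (p.1 / 2)) →
      (fun x : ℝ × ℝ => ∑ p ∈ S, α p *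
          ((((2 : ℝ) ^ ((3 * (p.1 : ℝ)) / 4) : ℝ) : ℂ) *
            ψ ((2 : ℝ) ^ p.1 * x.1 + (2 : ℝ) ^ (p.1 / 2) * (p.2.1 : ℝ) * x.2 - c₁ * p.2.2.1) *
            φ ((2 : ℝ) ^ (p.1 / 2) * x.2 - c₂ * p.2.2.2)))
        =ᵐ[volume] 0 →
      ∀ p ∈ S, α p = 0 := by
  intro S α _ hzero
  -- everywhere zero
  have hz : ∀ x₁ x₂ : ℝ, ∑ p ∈ S, α p *
          ((((2 : ℝ) ^ ((3 * (p.1 : ℝ)) / 4) : ℝ) : ℂ) *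
            ψ ((2 : ℝ) ^ p.1 * x₁ + (2 : ℝ) ^ (p.1 / 2) * (p.2.1 : ℝ) * x₂ - c₁ * p.2.2.1) *
            φ ((2 : ℝ) ^ (p.1 / 2) * x₂ - c₂ * p.2.2.2)) = 0 := by
    intro x₁ x₂
    have hc : Continuous (fun x : ℝ × ℝ => ∑ p ∈ S, α p *
          ((((2 : ℝ) ^ ((3 * (p.1 : ℝ)) / 4) : ℝ) : ℂ) *
            ψ ((2 : ℝ) ^ p.1 * x.1 + (2 : ℝ) ^ (p.1 / 2) * (p.2.1 : ℝ) * x.2 - c₁ * p.2.2.1) *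
            φ ((2 : ℝ) ^ (p.1 / 2) * x.2 - c₂ * p.2.2.2))) := by fun_prop
    exact congrFun ((hc.ae_eq_iff_eq volume continuous_zero).mp hzero) (x₁, x₂)
  have hb₁' : (b₁ : ℝ) ≠ 0 := by exact_mod_cast hb₁.ne'
  obtain ⟨J, hJ⟩ : ∃ J : ℕ, ∀ p ∈ S, p.1 ≤ J :=
    ⟨S.sup (fun p => p.1), fun p hp => Finset.le_sup (f := fun p : ℕ × ℤ × ℤ × ℤ => p.1) hp⟩
  -- finite expansions in translates of `φ`
  have hexp : ∀ p : ℕ × ℤ × ℤ × ℤ, ∃ A : ℤ →₀ ℂ, p ∈ S → ∀ u : ℝ,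
      ψ ((2 : ℝ) ^ p.1 * u - c₁ * p.2.2.1) =
        A.sum fun q a => a * φ ((2 : ℝ) ^ (J + 1) * u - q / b₁) := by
    intro p
    by_cases hp : p ∈ S
    swap
    · exact ⟨0, fun h => absurd h hp⟩
    have hcop : IsCoprime ((2 : ℤ) ^ p.1) (b₁ : ℤ) := by
      apply IsCoprime.pow_left
      rw [Int.isCoprime_iff_gcd_eq_one]
      have : Nat.Coprime 2 b₁ := Nat.coprime_two_left.mpr hb₁odd
      simpa [Int.gcd] using this
    obtain ⟨r, l, hrl⟩ := hcop
    have h2 : (0 : ℝ) < 2 ^ p.1 := by positivity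
    obtain ⟨K, a, hKa⟩ := aux_expand s φ
      (fun x => ψ ((2 : ℝ) ^ p.1 * x - ((l * (a₁ * p.2.2.1) : ℤ) : ℝ))) hφc hφsupp hφON
      (by fun_prop)
      (hψcs.comp_homeomorph ((Homeomorph.mulLeft₀ ((2 : ℝ) ^ p.1) h2.ne').trans
        (Homeomorph.subRight ((l * (a₁ * p.2.2.1) : ℤ) : ℝ))))
      (J + 1) (hψspan J p.1 (hJ p hp) _)
    have hmem : (fun u : ℝ => ψ ((2 : ℝ) ^ p.1 * u - c₁ * p.2.2.1)) ∈
        Submodule.span ℂ (Set.range fun q : ℤ => fun u : ℝ =>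
          φ ((2 : ℝ) ^ (J + 1) * u - q / b₁)) := by
      have : (fun u : ℝ => ψ ((2 : ℝ) ^ p.1 * u - c₁ * p.2.2.1)) =
          ∑ k ∈ K, a k • (fun u : ℝ => φ ((2 : ℝ) ^ (J + 1) * u -
            ((2 ^ (J + 1) * (r * (a₁ * p.2.2.1)) + k * b₁ : ℤ) : ℝ) / b₁)) := by
        ext u
        have h := hKa (u - (r * (a₁ * p.2.2.1) : ℤ) / b₁)
        rw [Finset.sum_apply]
        simp only [Pi.smul_apply, smul_eq_mul]
        have hrl' : (r : ℝ) * 2 ^ p.1 + l * b₁ = 1 := by exact_mod_cast hrl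
        have e1 : (2 : ℝ) ^ p.1 * (u - (r * (a₁ * p.2.2.1) : ℤ) / b₁)
            - ((l * (a₁ * p.2.2.1) : ℤ) : ℝ) = (2 : ℝ) ^ p.1 * u - c₁ * p.2.2.1 := by
          rw [hc₁]
          push_cast
          field_simp
          linear_combination (-(a₁ : ℝ) * p.2.2.1) * hrl'
        simp only [e1] at h
        rw [h]
        refine Finset.sum_congr rfl fun k _ => ?_
        congr 2
        push_cast
        field_simp
        ring
      rw [this]
      exact Submodule.sum_mem _ fun k _ =>
        Submodule.smul_mem _ _ (Submodule.subset_span ⟨_, rfl⟩)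
    rw [Finsupp.mem_span_range_iff_exists_finsupp] at hmem
    obtain ⟨A, hA⟩ := hmem
    refine ⟨A, fun _ u => ?_⟩
    have := congrFun hA u
    simp only [Finsupp.sum, Finset.sum_apply, Pi.smul_apply, smul_eq_mul] at this
    rw [← this, Finsupp.sum]
  choose A hA using hexp
  let σ : ℕ × ℤ × ℤ × ℤ → ℚ := fun p => 2 ^ (p.1 / 2) * p.2.1 / 2 ^ p.1
  let w : ℕ × ℤ × ℤ × ℤ → ℝ → ℂ := fun p y => α p * (((2 : ℝ) ^ ((3 * (p.1 : ℝ)) / 4) : ℝ) : ℂ) *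
    φ ((2 : ℝ) ^ (p.1 / 2) * y - c₂ * p.2.2.2)
  have hwc : ∀ p, Continuous (w p) := fun p => by fun_prop
  have hσ : ∀ p : ℕ × ℤ × ℤ × ℤ, ∀ x₁ x₂ : ℝ,
      (2 : ℝ) ^ p.1 * x₁ + (2 : ℝ) ^ (p.1 / 2) * (p.2.1 : ℝ) * x₂ =
        2 ^ p.1 * (x₁ + σ p * x₂) := by
    intro p x₁ x₂
    simp only [σ]
    push_cast
    field_simp
  -- separation of the slopes at irrational heights
  have hsep : ∀ y : ℝ, Irrational y → ∀ σ₀ : ℚ, ∀ u : ℝ,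
      ∑ p ∈ S with σ p = σ₀, w p y * ψ ((2 : ℝ) ^ p.1 * u - c₁ * p.2.2.1) = 0 := by
    intro y hy σ₀ u
    have hinj : Function.Injective
        (fun z : ℚ × ℤ => (z.2 : ℝ) / b₁ - 2 ^ (J + 1) * z.1 * y) := by
      rintro ⟨s1, q1⟩ ⟨s2, q2⟩ h
      simp only at h
      have hs12 : s1 = s2 := by
        by_contra hne
        apply hy
        refine ⟨((q1 : ℚ) / b₁ - q2 / b₁) / (2 ^ (J + 1) * (s1 - s2)), ?_⟩
        have hne' : ((s1 : ℝ) - s2) ≠ 0 := by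
          rw [sub_ne_zero]; exact_mod_cast hne
        push_cast
        rw [div_eq_iff (by positivity)]
        linear_combination h
      subst hs12
      have : (q1 : ℝ) / b₁ = q2 / b₁ := by linarith
      rw [div_left_inj' hb₁'] at this
      have : q1 = q2 := by exact_mod_cast this
      rw [this]
    have hli := (aux_translates s hs φ hφsupp).comp _ hinj
    rw [linearIndependent_iff] at hli
    let L : (ℚ × ℤ) →₀ ℂ := ∑ p ∈ S, (A p).sum fun q a => Finsupp.single (σ p, q) (w p y * a)
    have hL : L = 0 := by
      apply hli
      simp only [L, map_sum, Finsupp.sum, Finsupp.linearCombination_single]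
      ext v
      simp only [Finset.sum_apply, Pi.smul_apply, smul_eq_mul, Function.comp_apply, Pi.zero_apply]
      rw [← hz (v / 2 ^ (J + 1)) y]
      refine Finset.sum_congr rfl fun p hp => ?_
      rw [hσ, hA p hp, Finsupp.sum, Finset.mul_sum, Finset.sum_mul, Finset.mul_sum]
      refine Finset.sum_congr rfl fun q _ => ?_
      have : (2 : ℝ) ^ (J + 1) * (v / 2 ^ (J + 1) + σ p * y) - q / b₁ =
          v - (q / b₁ - 2 ^ (J + 1) * σ p * y) := by
        field_simp
        ring
      rw [this]
      simp only [w]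
      ring
    have hcomp : ∀ q : ℤ, ∑ p ∈ S with σ p = σ₀, w p y * A p q = 0 := by
      intro q
      have h := DFunLike.congr_fun hL (σ₀, q)
      simp only [L, Finsupp.sum, Finsupp.finsetSum_apply, Finsupp.coe_zero, Pi.zero_apply] at h
      rw [Finset.sum_filter]
      refine Eq.trans ?_ h
      refine Finset.sum_congr rfl fun p _ => ?_
      by_cases hp : σ p = σ₀
      · simp only [hp, if_true, Finsupp.single_apply, Prod.mk.injEq, true_and]
        rw [Finset.sum_ite_eq']
        split_ifs with hq
        · rfl
        · rw [Finsupp.notMem_support_iff.mp hq, mul_zero]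
      · simp [hp, Finsupp.single_apply]
    let Q : Finset ℤ := S.biUnion fun p => (A p).support
    have : ∀ p ∈ S, ψ ((2 : ℝ) ^ p.1 * u - c₁ * p.2.2.1) =
        ∑ q ∈ Q, A p q * φ ((2 : ℝ) ^ (J + 1) * u - q / b₁) := by
      intro p hp
      rw [hA p hp, Finsupp.sum]
      apply Finset.sum_subset
      · exact Finset.subset_biUnion_of_mem (fun p => (A p).support) hp
      · intro q _ hq
        rw [Finsupp.notMem_support_iff.mp hq, zero_mul]
    calc ∑ p ∈ S with σ p = σ₀, w p y * ψ ((2 : ℝ) ^ p.1 * u - c₁ * p.2.2.1)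
        = ∑ p ∈ S with σ p = σ₀, ∑ q ∈ Q,
            (w p y * A p q) * φ ((2 : ℝ) ^ (J + 1) * u - q / b₁) := by
          refine Finset.sum_congr rfl fun p hp => ?_
          rw [this p (Finset.mem_filter.mp hp).1, Finset.mul_sum]
          exact Finset.sum_congr rfl fun q _ => (mul_assoc _ _ _).symm
      _ = 0 := by
          rw [Finset.sum_comm]
          refine Finset.sum_eq_zero fun q _ => ?_
          rw [← Finset.sum_mul, hcomp, zero_mul]
  have hsep' : ∀ y : ℝ, ∀ σ₀ : ℚ, ∀ u : ℝ,
      ∑ p ∈ S with σ p = σ₀, w p y * ψ ((2 : ℝ) ^ p.1 * u - c₁ * p.2.2.1) = 0 := by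
    intro y σ₀ u
    have hc : Continuous fun y : ℝ =>
        ∑ p ∈ S with σ p = σ₀, w p y * ψ ((2 : ℝ) ^ p.1 * u - c₁ * p.2.2.1) := by fun_prop
    exact congrFun (hc.ext_on dense_irrational continuous_zero
      fun y hy => hsep y hy σ₀ u) y
  -- conclusion
  rintro ⟨j₀, k₀, m₀, n₀⟩ hp₀
  let σ₀ := σ (j₀, k₀, m₀, n₀)
  have hfin : ∀ y : ℝ,
      ∑ p ∈ (S.filter fun p => σ p = σ₀) with (p.1, p.2.2.1) = (j₀, m₀), w p y = 0 := by
    intro y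
    have h := (h1d c₁ (Or.inl rfl) ∅
      ((S.filter fun p => σ p = σ₀).image fun p => (p.1, p.2.2.1)) 0
      (fun z => ∑ p ∈ (S.filter fun p => σ p = σ₀) with (p.1, p.2.2.1) = z, w p y) (by
        ext u
        simp only [Finset.sum_empty, zero_add, Pi.zero_apply]
        rw [← hsep' y σ₀ u, ← Finset.sum_fiberwise_of_maps_to
          (g := fun p : ℕ × ℤ × ℤ × ℤ => (p.1, p.2.2.1))
          (fun p hp => Finset.mem_image_of_mem _ hp)]
        refine Finset.sum_congr rfl fun z _ => ?_
        rw [Finset.sum_mul]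
        refine Finset.sum_congr rfl fun p hp => ?_
        have := (Finset.mem_filter.mp hp).2
        rw [← this])).2
    exact h (j₀, m₀) (Finset.mem_image.mpr
      ⟨(j₀, k₀, m₀, n₀), Finset.mem_filter.mpr ⟨hp₀, rfl⟩, rfl⟩)
  have hfilt : ((S.filter fun p => σ p = σ₀).filter fun p => (p.1, p.2.2.1) = (j₀, m₀)) =
      ((S.image fun p => p.2.2.2).filter fun n => (j₀, k₀, m₀, n) ∈ S).image
        fun n => (j₀, k₀, m₀, n) := by
    ext ⟨j, k, m, n⟩
    simp only [Finset.mem_filter, Finset.mem_image, Prod.mk.injEq]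
    constructor
    · rintro ⟨⟨h1, h2⟩, rfl, rfl⟩
      have hk : k = k₀ := by
        simp only [σ₀, σ] at h2
        have h3 : (2 : ℚ) ^ j ≠ 0 := by positivity
        have h4 : (2 : ℚ) ^ (j / 2) ≠ 0 := by positivity
        rw [div_left_inj' h3] at h2
        exact_mod_cast mul_left_cancel₀ h4 h2
      subst hk
      exact ⟨n, ⟨⟨_, h1, rfl⟩, h1⟩, rfl, rfl, rfl, rfl⟩
    · rintro ⟨n', ⟨_, h1⟩, rfl, rfl, rfl, rfl⟩
      exact ⟨⟨h1, rfl⟩, rfl, rfl⟩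
  rw [hfilt] at hfin
  have hlast := (h1d c₂ (Or.inr rfl)
    ((S.image fun p => p.2.2.2).filter fun n => (j₀, k₀, m₀, n) ∈ S) ∅
    (fun n => α (j₀, k₀, m₀, n) * (((2 : ℝ) ^ ((3 * (j₀ : ℝ)) / 4) : ℝ) : ℂ)) 0 (by
      ext x
      simp only [Finset.sum_empty, add_zero, Pi.zero_apply]
      rw [← hfin (x / 2 ^ (j₀ / 2)), Finset.sum_image (by
        intro a _ b _ h
        simpa using h)]
      refine Finset.sum_congr rfl fun n _ => ?_
      simp only [w]
      congr 3
      field_simp)).1 n₀ (Finset.mem_filter.mpr ⟨Finset.mem_image.mpr ⟨_, hp₀, rfl⟩, hp₀⟩)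
  rcases mul_eq_zero.mp hlast with h | h
  · exact h
  · exfalso
    have : (0 : ℝ) < (2 : ℝ) ^ ((3 * (j₀ : ℝ)) / 4) := by positivity
    exact this.ne' (by exact_mod_cast h)
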